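/- Let n be a positive integer and let m be a positive integer with 2^{n+1} ≤ m ≤ 2^{n+2} − 3. Then 2^{2m + 2 − 2^{n+2}}·β(n, m) is an integer. -/

import Mathlib

def DI (e : ℕ) (x : ℚ) : Prop := ∃ z : ℤ, (2 : ℚ) ^ e * x = (z : ℚ)

lemma DI.mono {e f : ℕ} {x : ℚ} (h : DI e x) (hef : e ≤ f) : DI f x := by
  obtain ⟨z, hz⟩ := h
  obtain ⟨c, rfl⟩ := Nat.exists_eq_add_of_le hef
  refine ⟨2 ^ c * z, ?_⟩
  push_cast
  rw [← hz]; ring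

lemma DI.sub {e : ℕ} {x y : ℚ} (h : DI e x) (h' : DI e y) : DI e (x - y) := by
  obtain ⟨z, hz⟩ := h
  obtain ⟨w, hw⟩ := h'
  refine ⟨z - w, ?_⟩
  push_cast
  rw [← hz, ← hw]; ring

lemma DI.add {e : ℕ} {x y : ℚ} (h : DI e x) (h' : DI e y) : DI e (x + y) := by
  obtain ⟨z, hz⟩ := h
  obtain ⟨w, hw⟩ := h'
  refine ⟨z + w, ?_⟩
  push_cast
  rw [← hz, ← hw]; ring

lemma DI.mul {e f : ℕ} {x y : ℚ} (h : DI e x) (h' : DI f y) : DI (e + f) (x * y) := by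
  obtain ⟨z, hz⟩ := h
  obtain ⟨w, hw⟩ := h'
  refine ⟨z * w, ?_⟩
  push_cast
  rw [← hz, ← hw]; ring

lemma DI.zero (e : ℕ) : DI e 0 := ⟨0, by simp⟩

lemma DI.one : DI 0 1 := ⟨1, by simp⟩

lemma DI.half {e : ℕ} {x : ℚ} (h : DI e x) : DI (e + 1) (1 / 2 * x) := by
  obtain ⟨z, hz⟩ := h
  refine ⟨z, ?_⟩
  rw [← hz]; ring

lemma DI.sum {e : ℕ} (s : Finset ℕ) (f : ℕ → ℚ) (h : ∀ k ∈ s, DI e (f k)) :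
    DI e (∑ k ∈ s, f k) :=
  Finset.sum_induction f (DI e) (fun _ _ => DI.add) (DI.zero e) h

open Finset in
lemma beta_DI (β : ℕ → ℕ → ℚ)
    (hβ0 : ∀ n, β n 0 = 1)
    (hβzero : ∀ n m, 1 ≤ m → m ≤ 2 ^ (n + 1) - 2 → β n m = 0)
    (hβrec : ∀ n m, 2 ^ (n + 1) - 1 ≤ m →
      β n m = (1 / 2) * (β (n + 1) m
        - ∑ k ∈ Icc (2 ^ (n + 1) - 1) (m + 1 - 2 ^ (n + 1)), β n k * β n (m - k)
        - β 0 (m + 1 - 2 ^ (n + 1)))) (m : ℕ) :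
    ∀ n, 2 ^ (n + 1) - 1 ≤ m → DI (2 * m + 3 - 2 * 2 ^ (n + 1)) (β n m) := by
  induction m using Nat.strong_induction_on with
  | _ m ih =>
  have key : ∀ d n, m < n + d → 2 ^ (n + 1) - 1 ≤ m →
      DI (2 * m + 3 - 2 * 2 ^ (n + 1)) (β n m) := by
    intro d
    induction d with
    | zero =>
      intro n h1 h2
      have := Nat.lt_two_pow_self (n := n + 1)
      omega
    | succ d ihd =>
      intro n h1 h2
      have hN : 2 ≤ 2 ^ (n + 1) := by
        have := Nat.one_le_two_pow (n := n)
        rw [pow_succ]; omega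
      have hNN : 2 ^ (n + 1 + 1) = 2 * 2 ^ (n + 1) := by rw [pow_succ]; ring
      have hA := ihd (n + 1) (by omega)
      have hz := hβzero (n + 1) m
      rw [hβrec n m h2]
      rw [hNN] at hA hz
      have ihn : ∀ k < m, 2 ^ (n + 1) - 1 ≤ k → DI (2 * k + 3 - 2 * 2 ^ (n + 1)) (β n k) :=
        fun k hk => ih k hk n
      have ih0 : ∀ k < m, 1 ≤ k → DI (2 * k + 3 - 4) (β 0 k) := by
        intro k hk hk1
        simpa using ih k hk 0 (by simpa using hk1)
      generalize 2 ^ (n + 1) = N at *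
      have e : 2 * m + 3 - 2 * N = (2 * m + 2 - 2 * N) + 1 := by omega
      rw [e]
      refine DI.half (DI.sub (DI.sub ?_ ?_) ?_)
      · by_cases h : 2 * N - 1 ≤ m
        · exact (hA h).mono (by omega)
        · rw [hz (by omega) (by omega)]
          exact DI.zero _
      · refine DI.sum _ _ fun k hk => ?_
        rw [mem_Icc] at hk
        exact ((ihn k (by omega) (by omega)).mul (ihn (m - k) (by omega) (by omega))).mono
          (by omega)
      · by_cases h : m + 1 - N = 0
        · rw [h, hβ0]
          exact DI.one.mono (by omega)
        · exact (ih0 (m + 1 - N) (by omega) (by omega)).mono (by omega)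
  exact fun n => key (m + 1) n (by omega)

open Finset in
/-- For `β` satisfying the Ewing–Schober backward recursion, a positive
integer `n` and `2^(n+1) ≤ m ≤ 2^(n+2) - 3`, the rational
`2^(2m + 2 - 2^(n+2))·β(n, m)` is an integer. -/
theorem two_pow_beta_int (β : ℕ → ℕ → ℚ)
    (hβ0 : ∀ n, β n 0 = 1)
    (hβzero : ∀ n m, 1 ≤ m → m ≤ 2 ^ (n + 1) - 2 → β n m = 0)
    (hβrec : ∀ n m, 2 ^ (n + 1) - 1 ≤ m →
      β n m = (1 / 2) * (β (n + 1) m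
        - ∑ k ∈ Icc (2 ^ (n + 1) - 1) (m + 1 - 2 ^ (n + 1)), β n k * β n (m - k)
        - β 0 (m + 1 - 2 ^ (n + 1))))
    (n m : ℕ) (hn : 0 < n)
    (hm1 : 2 ^ (n + 1) ≤ m) (hm2 : m ≤ 2 ^ (n + 2) - 3) :
    ∃ z : ℤ, (2 : ℚ) ^ (2 * m + 2 - 2 ^ (n + 2)) * β n m = (z : ℚ) := by
  have hNN : 2 ^ (n + 2) = 2 * 2 ^ (n + 1) := by rw [pow_succ]; ring
  have hz := hβzero (n + 1) m
  have hr := hβrec n m (by omega)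
  have hd := beta_DI β hβ0 hβzero hβrec (m + 1 - 2 ^ (n + 1)) 0
  rw [show n + 1 + 1 = n + 2 from rfl, hNN] at hz
  rw [hNN] at hm2 ⊢
  have hN : 2 ≤ 2 ^ (n + 1) := by
    have := Nat.one_le_two_pow (n := n)
    rw [pow_succ]; omega
  generalize 2 ^ (n + 1) = N at *
  rw [hz (by omega) (by omega), Icc_eq_empty (by omega), sum_empty] at hr
  have hd' := hd (by simp; omega)
  rw [hr]
  refine (DI.half (DI.sub (DI.sub (DI.zero _) (DI.zero _)) hd')).mono ?_
  simp
  omega
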